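/- Let θ, c₀, ĉ, β ∈ ℝ and 0 ≤ τ < T ≤ ∞. Suppose v : [τ, T) → ℝ is continuously differentiable, v(τ) = p − ĉ, and β = (σ²/2) v′(x) + κ x (p − v(x)) − θ (p − v(x)) + c₀ for all x ∈ [τ, T). Then for every x ∈ [τ, T), v(x) = p − ĉ · exp[(−2θ(x − τ) + κ(x² − τ²))/σ²] + (2(β − c₀)√π/(σ√κ)) · exp[(κx − θ)²/(κσ²)] · ( Φ((κx − θ)/(σ√(κ/2))) − Φ((κτ − θ)/(σ√(κ/2))) ). -/

import Mathlib

/-!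
The equation is linear of first order in `v - p`. Put `q x = (κ x - θ)² / (κ σ²)` and
`z x = (κ x - θ) / (σ √(κ/2))`. Then `exp (-q)` is an integrating factor, and since `z² / 2 = q`
the chain rule gives `(Φ ∘ z)' = const * exp (-q)`. Hence, with
`A = 2 (β - c₀) √π / (σ √κ)`, the function `exp (-q) * (v - p) - A * Φ ∘ z` has derivative zero on
`[τ, x]`. It therefore takes the same value at `x` and at `τ`, and solving for `v x` gives the
formula. The analytic input is `Φ' = φ`, proved in `hasDerivAt_stdNormalCDF`.
-/

open Set

noncomputable def stdNormalCDF (x : ℝ) : ℝ :=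
  ∫ u in Set.Iic x, (Real.sqrt (2 * Real.pi))⁻¹ * Real.exp (-u ^ 2 / 2)

/-- The fundamental theorem of calculus for the Gaussian density: `Φ' = φ`. -/
lemma hasDerivAt_stdNormalCDF (x : ℝ) :
    HasDerivAt stdNormalCDF ((Real.sqrt (2 * Real.pi))⁻¹ * Real.exp (-x ^ 2 / 2)) x := by
  set g : ℝ → ℝ := fun u => (Real.sqrt (2 * Real.pi))⁻¹ * Real.exp (-u ^ 2 / 2) with hg
  have hc : Continuous g := by fun_prop
  have hi : MeasureTheory.Integrable g := by
    have h := (integrable_exp_neg_mul_sq (b := 1 / 2) (by norm_num)).const_mul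
      ((Real.sqrt (2 * Real.pi))⁻¹)
    refine h.congr (Filter.Eventually.of_forall fun u => ?_)
    simp only [hg]
    congr 2
    ring
  have heq : stdNormalCDF = fun y => stdNormalCDF 0 + ∫ u in (0 : ℝ)..y, g u := by
    funext y
    have h := intervalIntegral.integral_Iic_sub_Iic (hi.integrableOn (s := Iic 0))
      (hi.integrableOn (s := Iic y))
    simp only [stdNormalCDF]
    rw [← h]
    ring
  rw [heq]
  exact (intervalIntegral.integral_hasDerivAt_right (hc.intervalIntegrable _ _)
    (hc.stronglyMeasurableAtFilter _ _) hc.continuousAt).const_add _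

theorem stmt_2
    (σ κ p : ℝ) (hσ : 0 < σ) (hκ : 0 < κ) (hp : 0 < p)
    (θ c₀ cHat β τ : ℝ) (T : EReal) (hτ : 0 ≤ τ) (hT : (τ : EReal) < T)
    (v v' : ℝ → ℝ)
    (hvd : ∀ x ∈ {x : ℝ | τ ≤ x ∧ (x : EReal) < T},
      HasDerivWithinAt v (v' x) {x : ℝ | τ ≤ x ∧ (x : EReal) < T} x)
    (hvc : ContinuousOn v' {x : ℝ | τ ≤ x ∧ (x : EReal) < T})
    (hvτ : v τ = p - cHat)
    (hode : ∀ x ∈ {x : ℝ | τ ≤ x ∧ (x : EReal) < T},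
      β = σ^2/2 * v' x + κ * x * (p - v x) - θ * (p - v x) + c₀) :
    ∀ x ∈ {x : ℝ | τ ≤ x ∧ (x : EReal) < T},
      v x = p - cHat * Real.exp ((-(2 * θ) * (x - τ) + κ * (x^2 - τ^2)) / σ^2)
        + 2 * (β - c₀) * Real.sqrt Real.pi / (σ * Real.sqrt κ)
          * Real.exp ((κ * x - θ)^2 / (κ * σ^2))
          * (stdNormalCDF ((κ * x - θ) / (σ * Real.sqrt (κ / 2)))
             - stdNormalCDF ((κ * τ - θ) / (σ * Real.sqrt (κ / 2)))) := by
  intro x hx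
  set S : Set ℝ := {x : ℝ | τ ≤ x ∧ (x : EReal) < T} with hS
  have hsub : Icc τ x ⊆ S := fun y hy =>
    ⟨hy.1, lt_of_le_of_lt (EReal.coe_le_coe_iff.mpr hy.2) hx.2⟩
  set A : ℝ := 2 * (β - c₀) * Real.sqrt Real.pi / (σ * Real.sqrt κ) with hA
  have hsκ : 0 < Real.sqrt κ := by positivity
  have hsπ : 0 < Real.sqrt Real.pi := Real.sqrt_pos.mpr Real.pi_pos
  have eκ : Real.sqrt κ ^ 2 = κ := Real.sq_sqrt hκ.le
  have hκ2 : Real.sqrt (κ / 2) = Real.sqrt κ / Real.sqrt 2 := Real.sqrt_div hκ.le 2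
  have hπ2 : Real.sqrt (2 * Real.pi) = Real.sqrt 2 * Real.sqrt Real.pi :=
    Real.sqrt_mul (by norm_num) _
  -- `A * φ(z) * z' = (2 (β - c₀) / σ²) * exp (-q)`: the constant in front of the exponential.
  have hconst : A * ((Real.sqrt (2 * Real.pi))⁻¹ * (κ / (σ * Real.sqrt (κ / 2))))
      = 2 * (β - c₀) / σ ^ 2 := by
    rw [hA, hκ2, hπ2]
    field_simp
    rw [eκ]
  have hzq : ∀ y : ℝ, -((κ * y - θ) / (σ * Real.sqrt (κ / 2))) ^ 2 / 2
      = -((κ * y - θ) ^ 2 / (κ * σ ^ 2)) := by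
    intro y
    rw [div_pow, mul_pow, Real.sq_sqrt (by positivity)]
    field_simp
  set F : ℝ → ℝ := fun y => Real.exp (-((κ * y - θ) ^ 2 / (κ * σ ^ 2))) * (v y - p)
    - A * stdNormalCDF ((κ * y - θ) / (σ * Real.sqrt (κ / 2))) with hF
  have hFd : ∀ y ∈ Icc τ x, HasDerivWithinAt F 0 (Icc τ x) y := by
    intro y hy
    have hv := (hvd y (hsub hy)).mono hsub
    have ho := hode y (hsub hy)
    have hl : HasDerivAt (fun y : ℝ => κ * y - θ) κ y := by
      simpa using ((hasDerivAt_id y).const_mul κ).sub_const θ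
    have hq := ((hl.pow 2).div_const (κ * σ ^ 2)).neg.exp
    have hz := (hasDerivAt_stdNormalCDF ((κ * y - θ) / (σ * Real.sqrt (κ / 2)))).comp y
      (hl.div_const (σ * Real.sqrt (κ / 2)))
    have h := (hq.hasDerivWithinAt.mul (hv.sub_const p)).sub
      ((hz.const_mul A).hasDerivWithinAt (s := Icc τ x))
    refine h.congr_deriv ?_
    rw [hzq]
    simp only [Pi.pow_apply, Pi.neg_apply]
    set E := Real.exp (-((κ * y - θ) ^ 2 / (κ * σ ^ 2)))
    have hv' : v' y = 2 * (β - c₀) / σ ^ 2 - 2 * (κ * y - θ) * (p - v y) / σ ^ 2 := by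
      field_simp
      linarith
    have hr : A * ((Real.sqrt (2 * Real.pi))⁻¹ * E * (κ / (σ * Real.sqrt (κ / 2))))
        = 2 * (β - c₀) / σ ^ 2 * E := by
      rw [← hconst]
      ring
    rw [hr, hv']
    field_simp
    ring
  have hFF : F x = F τ := by
    have h := (convex_Icc τ x).norm_image_sub_le_of_norm_hasDerivWithin_le (C := 0) hFd
      (fun y _ => by simp) (left_mem_Icc.mpr hx.1) (right_mem_Icc.mpr hx.1)
    rw [zero_mul] at h
    exact sub_eq_zero.mp (norm_le_zero_iff.mp h)
  simp only [hF, hvτ] at hFF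
  have hexp : Real.exp ((-(2 * θ) * (x - τ) + κ * (x ^ 2 - τ ^ 2)) / σ ^ 2)
      = Real.exp ((κ * x - θ) ^ 2 / (κ * σ ^ 2))
        * Real.exp (-((κ * τ - θ) ^ 2 / (κ * σ ^ 2))) := by
    rw [← Real.exp_add]
    congr 1
    field_simp
    ring
  have h1 : Real.exp ((κ * x - θ) ^ 2 / (κ * σ ^ 2))
      * Real.exp (-((κ * x - θ) ^ 2 / (κ * σ ^ 2))) = 1 := by
    rw [← Real.exp_add, add_neg_cancel, Real.exp_zero]
  rw [hexp]
  linear_combination Real.exp ((κ * x - θ) ^ 2 / (κ * σ ^ 2)) * hFF - (v x - p) * h1
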